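/- Let H = {rrr, bby, yyb} (the patterns: a monochromatic red triangle, a triangle with two blue edges and one yellow edge, and a triangle with two yellow edges and one blue edge). Then for every integer n ≥ 3, h_2(n, H) = ⌈n/2⌉. -/

import Mathlib

/-- The three edge colors: red, blue, yellow. -/
inductive Col : Type
  | r | b | y
  deriving DecidableEq

/-- A (symmetric) 3-edge-coloring of the complete graph `K_n` on vertex set `Fin n`. -/
structure Coloring (n : ℕ) where
  col : Fin n → Fin n → Col
  symm : ∀ i j, col i j = col j i

/-- The pattern (multiset of edge colors) of the triangle on vertices `u, v, w`. -/
def triPattern {n : ℕ} (c : Coloring n) (u v w : Fin n) : Multiset Col :=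
  {c.col u v, c.col v w, c.col u w}

/-- The coloring `c` contains the pattern `P`: some triangle has color multiset `P`. -/
def Contains {n : ℕ} (c : Coloring n) (P : Multiset Col) : Prop :=
  ∃ u v w : Fin n, u ≠ v ∧ v ≠ w ∧ u ≠ w ∧ triPattern c u v w = P

/-- The coloring `c` avoids every pattern in the family `H`. -/
def Avoids {n : ℕ} (c : Coloring n) (H : Set (Multiset Col)) : Prop :=
  ∀ P ∈ H, ¬ Contains c P

/-- A vertex set `S` is two-colored under `c`: the edges inside `S` use at most
two of the three colors, i.e. some color is missing on the edges inside `S`. -/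
def TwoColored {n : ℕ} (c : Coloring n) (S : Finset (Fin n)) : Prop :=
  ∃ x : Col, ∀ i ∈ S, ∀ j ∈ S, i ≠ j → c.col i j ≠ x

/-- `h2 c` is the maximum size of a vertex set whose induced edges use at most
two of the three colors. -/
noncomputable def h2 {n : ℕ} (c : Coloring n) : ℕ :=
  sSup {k | ∃ S : Finset (Fin n), TwoColored c S ∧ S.card = k}

/-- `h2n n H = min { h2 c : c a 3-edge-coloring of K_n avoiding all patterns in H }`. -/
noncomputable def h2n (n : ℕ) (H : Set (Multiset Col)) : ℕ :=
  sInf {m | ∃ c : Coloring n, Avoids c H ∧ h2 c = m}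

/-- Pattern abbreviations. -/
def Prrr : Multiset Col := {Col.r, Col.r, Col.r}
def Pbbb : Multiset Col := {Col.b, Col.b, Col.b}
def Pyyy : Multiset Col := {Col.y, Col.y, Col.y}
def Prrb : Multiset Col := {Col.r, Col.r, Col.b}
def Prry : Multiset Col := {Col.r, Col.r, Col.y}
def Pbbr : Multiset Col := {Col.b, Col.b, Col.r}
def Pbby : Multiset Col := {Col.b, Col.b, Col.y}
def Pyyr : Multiset Col := {Col.y, Col.y, Col.r}
def Pyyb : Multiset Col := {Col.y, Col.y, Col.b}
def Prby : Multiset Col := {Col.r, Col.b, Col.y}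


/-- A vertex with both kinds of non-red neighbors, where the red neighborhood has no `y`-edge. -/
theorem aux_mixed {n : ℕ} (c : Coloring n) (b y : Col) (hb : b ≠ Col.r) (hy : y ≠ Col.r)
    (hby : b ≠ y) (hall : ∀ i j, c.col i j = Col.r ∨ c.col i j = b ∨ c.col i j = y)
    (h1 : ∀ u v w, u ≠ v → v ≠ w → u ≠ w → c.col u v = Col.r → c.col v w = Col.r →
      c.col u w ≠ Col.r)
    (h2 : ∀ u v w, u ≠ v → v ≠ w → u ≠ w → c.col u v = b → c.col v w = y →
      c.col u w = Col.r)
    (v p q : Fin n) (hp : v ≠ p) (hq : v ≠ q) (hpb : c.col v p = b) (hqy : c.col v q = y)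
    (hR : ∀ s t, s ≠ t → v ≠ s → v ≠ t → c.col v s = Col.r → c.col v t = Col.r →
      c.col s t ≠ y) :
    ∃ S : Finset (Fin n), TwoColored c S ∧ n ≤ 2 * S.card := by
  classical
  have hs := c.symm
  -- color classes at v
  have hBY : ∀ s t, v ≠ s → v ≠ t → c.col v s = b → c.col v t = y → c.col s t = Col.r := by
    intro s t hvs hvt e1 e2
    exact h2 s v t hvs.symm hvt (by rintro rfl; exact hby (e1.symm.trans e2))
      ((hs s v).trans e1) e2
  have hBB : ∀ s t, s ≠ t → v ≠ s → v ≠ t → c.col v s = b → c.col v t = b →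
      c.col s t = b := by
    intro s t hst hvs hvt e1 e2
    have a1 := hBY s q hvs hq e1 hqy
    have a2 := hBY t q hvt hq e2 hqy
    have n1 : s ≠ q := by rintro rfl; exact hby (e1.symm.trans hqy)
    have n2 : t ≠ q := by rintro rfl; exact hby (e2.symm.trans hqy)
    have a3 := h1 s q t n1 n2.symm hst a1 ((hs q t).trans a2)
    have a4 : c.col s t ≠ y := by
      intro e
      have := h2 v s t hvs hst hvt e1 e
      exact hb (e2.symm.trans this)
    rcases hall s t with h | h | h <;> simp_all
  have hYY : ∀ s t, s ≠ t → v ≠ s → v ≠ t → c.col v s = y → c.col v t = y →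
      c.col s t = y := by
    intro s t hst hvs hvt e1 e2
    have a1 := hBY p s hp hvs hpb e1
    have a2 := hBY p t hp hvt hpb e2
    have n1 : s ≠ p := by rintro rfl; exact hby (hpb.symm.trans e1)
    have n2 : t ≠ p := by rintro rfl; exact hby (hpb.symm.trans e2)
    have a3 := h1 s p t n1 n2.symm hst ((hs s p).trans a1) a2
    have a4 : c.col s t ≠ b := by
      intro e
      have := h2 s t v hst hvt.symm hvs.symm e ((hs t v).trans e2)
      exact hy (e1.symm.trans ((hs v s).trans this))
    rcases hall s t with h | h | h <;> simp_all
  have hRR : ∀ s t, s ≠ t → v ≠ s → v ≠ t → c.col v s = Col.r → c.col v t = Col.r →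
      c.col s t = b := by
    intro s t hst hvs hvt e1 e2
    have a3 := h1 s v t hvs.symm hvt hst ((hs s v).trans e1) e2
    have a4 := hR s t hst hvs hvt e1 e2
    rcases hall s t with h | h | h <;> simp_all
  by_cases hB2 : ∃ p', p' ≠ p ∧ v ≠ p' ∧ c.col v p' = b
  · obtain ⟨p', hpp, hp', hpb'⟩ := hB2
    let T : Finset (Fin n) := Finset.univ.filter fun z =>
      v ≠ z ∧ (c.col v z = y ∨ (c.col v z = Col.r ∧
        ∀ x, v ≠ x → x ≠ z → c.col v x = y → c.col z x ≠ Col.r))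
    have hT : TwoColored c T := by
      refine ⟨Col.r, ?_⟩
      intro i hi j hj hij
      simp only [T, Finset.mem_filter, Finset.mem_univ, true_and] at hi hj
      obtain ⟨hvi, hi⟩ := hi
      obtain ⟨hvj, hj⟩ := hj
      rcases hi with hi | ⟨hi, hi'⟩ <;> rcases hj with hj | ⟨hj, hj'⟩
      · rw [hYY i j hij hvi hvj hi hj]; exact hy
      · rw [hs]; exact hj' i hvi hij hi
      · exact hi' j hvj hij.symm hj
      · rw [hRR i j hij hvi hvj hi hj]; exact hb
    -- red neighbors outside `T` are joined in `b` to the `b`-neighbors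
    have key : ∀ z w, v ≠ z → v ≠ w → z ∉ T → c.col v z = Col.r → c.col v w = b →
        c.col z w ≠ y := by
      intro z w hvz hvw hz ez ew e
      simp only [T, Finset.mem_filter, Finset.mem_univ, true_and] at hz
      have : ∃ x, v ≠ x ∧ x ≠ z ∧ c.col v x = y ∧ c.col z x = Col.r := by
        by_contra! hcon
        exact hz ⟨hvz, Or.inr ⟨ez, fun x a b c => hcon x a b c⟩⟩
      obtain ⟨x, hvx, hxz, ex, ezx⟩ := this
      have nonred : ∀ w', v ≠ w' → c.col v w' = b → c.col z w' ≠ Col.r := by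
        intro w' hvw' ew'
        have a := hBY w' x hvw' hvx ew' ex
        have n1 : z ≠ w' := by rintro rfl; exact hb (ew'.symm.trans ez)
        have n2 : x ≠ w' := by rintro rfl; exact hby (ew'.symm.trans ex)
        exact h1 z x w' hxz.symm n2 n1 ezx ((hs x w').trans a)
      have : ∃ w', w' ≠ w ∧ v ≠ w' ∧ c.col v w' = b := by
        by_cases h : w = p
        · exact ⟨p', by rw [h]; exact hpp, hp', hpb'⟩
        · exact ⟨p, fun h' => h h'.symm, hp, hpb⟩
      obtain ⟨w', hww, hvw', ew'⟩ := this
      have n1 : z ≠ w' := by rintro rfl; exact hb (ew'.symm.trans ez)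
      have n2 : z ≠ w := by rintro rfl; exact hb (ew.symm.trans ez)
      have a := hBB w' w hww hvw' hvw ew' ew
      exact nonred w' hvw' ew' ((hs z w').trans
        (h2 w' w z hww n2.symm n1.symm a ((hs w z).trans e)))
    have hS : TwoColored c Tᶜ := by
      refine ⟨y, ?_⟩
      have vT : ∀ j, j ∈ Tᶜ → v ≠ j → c.col v j ≠ y := by
        intro j hj hvj e
        simp only [T, Finset.mem_compl, Finset.mem_filter, Finset.mem_univ, true_and] at hj
        exact hj ⟨hvj, Or.inl e⟩
      intro i hi j hj hij
      by_cases hvi : v = i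
      · subst hvi; exact vT j hj hij
      by_cases hvj : v = j
      · subst hvj; rw [hs]; exact vT i hi hvi
      have a1 := vT i hi hvi
      have a2 := vT j hj hvj
      rw [Finset.mem_compl] at hi hj
      rcases hall v i with e | e | e
      · rcases hall v j with e' | e' | e'
        · rw [hRR i j hij hvi hvj e e']; exact hby
        · exact key i j hvi hvj hi e e'
        · exact absurd e' a2
      · rcases hall v j with e' | e' | e'
        · rw [hs]; exact key j i hvj hvi hj e' e
        · rw [hBB i j hij hvi hvj e e']; exact hby
        · exact absurd e' a2
      · exact absurd e a1
    have hc := Finset.card_add_card_compl T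
    rw [Fintype.card_fin] at hc
    rcases le_total T.card Tᶜ.card with h | h
    · exact ⟨_, hS, by omega⟩
    · exact ⟨_, hT, by omega⟩
  · push Not at hB2
    let A : Finset (Fin n) := Finset.univ.filter fun z => z = v ∨ c.col v z = y
    let B : Finset (Fin n) := Finset.univ.filter fun z => z = v ∨ c.col v z = Col.r
    have hA : TwoColored c A := by
      refine ⟨Col.r, ?_⟩
      intro i hi j hj hij
      simp only [A, Finset.mem_filter, Finset.mem_univ, true_and] at hi hj
      by_cases hvi : v = i
      · subst hvi
        rcases hj with rfl | hj
        · exact absurd rfl hij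
        · rw [hj]; exact hy
      by_cases hvj : v = j
      · subst hvj
        rcases hi with rfl | hi
        · exact absurd rfl hij
        · rw [hs, hi]; exact hy
      have e1 := hi.resolve_left (Ne.symm hvi)
      have e2 := hj.resolve_left (Ne.symm hvj)
      rw [hYY i j hij hvi hvj e1 e2]; exact hy
    have hB : TwoColored c B := by
      refine ⟨y, ?_⟩
      intro i hi j hj hij
      simp only [B, Finset.mem_filter, Finset.mem_univ, true_and] at hi hj
      by_cases hvi : v = i
      · subst hvi
        rcases hj with rfl | hj
        · exact absurd rfl hij
        · rw [hj]; exact hy.symm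
      by_cases hvj : v = j
      · subst hvj
        rcases hi with rfl | hi
        · exact absurd rfl hij
        · rw [hs, hi]; exact hy.symm
      have e1 := hi.resolve_left (Ne.symm hvi)
      have e2 := hj.resolve_left (Ne.symm hvj)
      exact hR i j hij hvi hvj e1 e2
    have hcov : (Finset.univ : Finset (Fin n)) ⊆ insert p (A ∪ (B.erase v)) := by
      intro z _
      simp only [A, B, Finset.mem_insert, Finset.mem_union, Finset.mem_erase, Finset.mem_filter,
        Finset.mem_univ, true_and]
      by_cases hzv : z = v
      · simp [hzv]
      by_cases hzp : z = p
      · simp [hzp]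
      have := hB2 z hzp (Ne.symm hzv)
      rcases hall v z with h | h | h
      · exact Or.inr (Or.inr ⟨hzv, Or.inr h⟩)
      · exact absurd h this
      · exact Or.inr (Or.inl (Or.inr h))
    have c1 := Finset.card_le_card hcov
    have c2 := Finset.card_insert_le p (A ∪ (B.erase v))
    have c3 := Finset.card_union_le A (B.erase v)
    have hvB : v ∈ B := by simp [B]
    have c4 := Finset.card_erase_add_one hvB
    rw [Finset.card_univ, Fintype.card_fin] at c1
    rcases le_total A.card B.card with h | h
    · exact ⟨_, hB, by omega⟩
    · exact ⟨_, hA, by omega⟩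

theorem lower_aux {n : ℕ} (c : Coloring n)
    (h1 : ∀ u v w, u ≠ v → v ≠ w → u ≠ w → c.col u v = Col.r → c.col v w = Col.r →
      c.col u w ≠ Col.r)
    (h2 : ∀ u v w, u ≠ v → v ≠ w → u ≠ w → c.col u v = Col.b → c.col v w = Col.y →
      c.col u w = Col.r) :
    ∃ S : Finset (Fin n), TwoColored c S ∧ n ≤ 2 * S.card := by
  classical
  have hs := c.symm
  have h2' : ∀ u v w, u ≠ v → v ≠ w → u ≠ w → c.col u v = Col.y → c.col v w = Col.b →
      c.col u w = Col.r := by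
    intro u v w a b d e f
    rw [hs]; exact h2 w v u b.symm a.symm d.symm ((hs w v).trans f) ((hs v u).trans e)
  have hall : ∀ i j, c.col i j = Col.r ∨ c.col i j = Col.b ∨ c.col i j = Col.y := by
    intro i j; cases c.col i j <;> simp
  by_cases hm : ∃ v p q, v ≠ p ∧ v ≠ q ∧ c.col v p = Col.b ∧ c.col v q = Col.y
  · obtain ⟨v, p, q, hp, hq, hpb, hqy⟩ := hm
    by_cases hR : ∀ s t, s ≠ t → v ≠ s → v ≠ t → c.col v s = Col.r → c.col v t = Col.r →
      c.col s t ≠ Col.y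
    · exact aux_mixed c Col.b Col.y (by simp) (by simp) (by simp) hall h1 h2 v p q hp hq hpb hqy hR
    · push Not at hR
      obtain ⟨s, t, hst, hvs, hvt, es, et, est⟩ := hR
      have nr : ∀ s t, s ≠ t → v ≠ s → v ≠ t → c.col v s = Col.r → c.col v t = Col.r →
          c.col s t ≠ Col.r := fun s t a b d e f => 
            h1 s v t b.symm d a ((hs s v).trans e) f
      refine aux_mixed c Col.y Col.b (by simp) (by simp) (by simp)
        (fun i j => (hall i j).imp_right Or.symm) h1 h2' v q p hq hp hqy hpb ?_
      -- a `b`-edge touching an endpoint of a `y`-edge is impossible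
      have step : ∀ a d e, a ≠ d → d ≠ e → v ≠ a → v ≠ d → v ≠ e → c.col v a = Col.r →
          c.col v d = Col.r → c.col v e = Col.r → c.col a d = Col.y → c.col d e ≠ Col.b := by
        intro a d e had hde hva hvd hve ea ed ee h h'
        have hae : a ≠ e := by
          rintro rfl
          rw [hs, h] at h'; simp at h'
        exact nr a e hae hva hve ea ee (h2' a d e had hde hae h h')
      intro i j hij hvi hvj ei ej eij
      by_cases hti : t = i
      · subst hti; exact step s t j hst hij hvs hvi hvj es ei ej est eij
      rcases hall t i with e | e | e
      · exact nr t i hti hvt hvi et ei e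
      · exact step s t i hst hti hvs hvt hvi es et ei est e
      · exact step t i j hti hij hvt hvi hvj et ei ej e eij
  · push Not at hm
    let S : Finset (Fin n) := Finset.univ.filter fun v => ∃ p, v ≠ p ∧ c.col v p = Col.b
    have hS : TwoColored c S := by
      refine ⟨Col.y, ?_⟩
      intro i hi j _ hij
      simp only [S, Finset.mem_filter, Finset.mem_univ, true_and] at hi
      obtain ⟨p, hp, e⟩ := hi
      exact hm i p j hp hij e
    have hT : TwoColored c Sᶜ := by
      refine ⟨Col.b, ?_⟩
      intro i hi j _ hij e
      simp only [S, Finset.mem_compl, Finset.mem_filter, Finset.mem_univ, true_and] at hi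
      exact hi ⟨j, hij, e⟩
    have hc := Finset.card_add_card_compl S
    rw [Fintype.card_fin] at hc
    rcases le_total S.card Sᶜ.card with h | h
    · exact ⟨_, hT, by omega⟩
    · exact ⟨_, hS, by omega⟩

theorem h2_set_bdd {n : ℕ} (c : Coloring n) :
    BddAbove {k | ∃ S : Finset (Fin n), TwoColored c S ∧ S.card = k} := by
  refine ⟨n, ?_⟩
  rintro k ⟨S, _, rfl⟩
  simpa using Finset.card_le_univ S

theorem lower_bound {n : ℕ} (c : Coloring n) (hc : Avoids c {Prrr, Pbby, Pyyb}) :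
    (n + 1) / 2 ≤ h2 c := by
  have hrrr := hc Prrr (by simp)
  have hbby := hc Pbby (by simp)
  have hyyb := hc Pyyb (by simp)
  obtain ⟨S, hS, hcard⟩ := lower_aux c
    (by
      intro u v w a b d e f g
      exact hrrr ⟨u, v, w, a, b, d, by simp [triPattern, Prrr, e, f, g]⟩)
    (by
      intro u v w a b d e f
      cases g : c.col u w with
      | r => rfl
      | b => exact absurd ⟨u, v, w, a, b, d, by rw [triPattern, Pbby, e, f, g]; decide⟩ hbby
      | y => exact absurd ⟨u, v, w, a, b, d, by rw [triPattern, Pyyb, e, f, g]; decide⟩ hyyb)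
  have : S.card ≤ h2 c := le_csSup (h2_set_bdd c) ⟨S, hS, rfl⟩
  omega

/-- The extremal coloring: two blue cliques, a yellow matching, red otherwise. -/
def extCol (n : ℕ) : Coloring n where
  col i j := if i.val % 2 = j.val % 2 then Col.b
    else if i.val / 2 = j.val / 2 then Col.y else Col.r
  symm i j := by simp only [eq_comm]

theorem ext_avoids (n : ℕ) : Avoids (extCol n) {Prrr, Pbby, Pyyb} := by
  have e1 : ∀ a b d : Col, ({a, b, d} : Multiset Col) = Prrr → a = .r ∧ b = .r ∧ d = .r := by
    intro a b d; cases a <;> cases b <;> cases d <;> decide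
  have e2 : ∀ a b d : Col, ({a, b, d} : Multiset Col) = Pbby →
      (a = .b ∧ b = .b ∧ d = .y) ∨ (a = .b ∧ b = .y ∧ d = .b) ∨ (a = .y ∧ b = .b ∧ d = .b) := by
    intro a b d; cases a <;> cases b <;> cases d <;> decide
  have e3 : ∀ a b d : Col, ({a, b, d} : Multiset Col) = Pyyb →
      (a = .y ∧ b = .y ∧ d = .b) ∨ (a = .y ∧ b = .b ∧ d = .y) ∨ (a = .b ∧ b = .y ∧ d = .y) := by
    intro a b d; cases a <;> cases b <;> cases d <;> decide
  have cr : ∀ i j, (extCol n).col i j = .r → i.val % 2 ≠ j.val % 2 := by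
    intro i j h h'; simp [extCol, h'] at h
  have cb : ∀ i j, (extCol n).col i j = .b → i.val % 2 = j.val % 2 := by
    intro i j h; simp only [extCol] at h; split_ifs at h; assumption
  have cy : ∀ i j, (extCol n).col i j = .y → i.val % 2 ≠ j.val % 2 ∧ i.val / 2 = j.val / 2 := by
    intro i j h; simp only [extCol] at h; split_ifs at h; constructor <;> assumption
  intro P hP
  rintro ⟨u, v, w, huv, hvw, huw, h⟩
  rw [ne_eq, Fin.ext_iff] at huv hvw huw
  rw [triPattern] at h
  rcases hP with rfl | rfl | rfl
  · obtain ⟨a, b, d⟩ := e1 _ _ _ h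
    have := cr _ _ a
    have := cr _ _ b
    have := cr _ _ d
    omega
  · rcases e2 _ _ _ h with ⟨a, b, d⟩ | ⟨a, b, d⟩ | ⟨a, b, d⟩
    · have := cb _ _ a; have := cb _ _ b; have := cy _ _ d; omega
    · have := cb _ _ a; have := cy _ _ b; have := cb _ _ d; omega
    · have := cy _ _ a; have := cb _ _ b; have := cb _ _ d; omega
  · rcases e3 _ _ _ h with ⟨a, b, d⟩ | ⟨a, b, d⟩ | ⟨a, b, d⟩
    · have := cy _ _ a; have := cy _ _ b; have := cb _ _ d; omega
    · have := cy _ _ a; have := cb _ _ b; have := cy _ _ d; omega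
    · have := cb _ _ a; have := cy _ _ b; have := cy _ _ d; omega

theorem ext_upper (n : ℕ) (hn : 3 ≤ n) : h2 (extCol n) ≤ (n + 1) / 2 := by
  classical
  refine csSup_le ⟨0, ∅, ⟨Col.r, by simp⟩, rfl⟩ ?_
  rintro k ⟨S, ⟨x, hx⟩, rfl⟩
  -- injectivity of the halving map bounds the size
  have half : (∀ i ∈ S, ∀ j ∈ S, i.val / 2 = j.val / 2 → i = j) → S.card ≤ (n + 1) / 2 := by
    intro h
    have := Finset.card_le_card_of_injOn (s := S) (t := Finset.range ((n + 1) / 2))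
      (fun i : Fin n => i.val / 2)
      (by intro i _; have := i.isLt; simp only [Finset.coe_range, Set.mem_Iio]; omega)
      (by intro i hi j hj e; exact h i hi j hj e)
    simpa using this
  cases x with
  | y =>
    apply half
    intro i hi j hj e
    by_contra hij
    have := hx i hi j hj hij
    rw [Fin.ext_iff] at hij
    have hne : i.val % 2 ≠ j.val % 2 := by omega
    simp [extCol, hne, e] at this
  | b =>
    have := Finset.card_le_card_of_injOn (s := S) (t := Finset.range 2)
      (fun i : Fin n => i.val % 2)
      (by intro i _; simp only [Finset.coe_range, Set.mem_Iio]; omega)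
      (by
        intro i hi j hj e
        by_contra hij
        have e' : i.val % 2 = j.val % 2 := e
        have := hx i hi j hj hij
        simp [extCol, e'] at this)
    rw [Finset.card_range] at this
    omega
  | r =>
    have hx' : ∀ i ∈ S, ∀ j ∈ S, i.val % 2 = j.val % 2 ∨ i.val / 2 = j.val / 2 := by
      intro i hi j hj
      by_cases hij : i = j
      · left; rw [hij]
      have := hx i hi j hj hij
      by_contra! hcon
      simp [extCol, hcon.1, hcon.2] at this
    by_cases hpar : ∀ i ∈ S, ∀ j ∈ S, i.val % 2 = j.val % 2
    · apply half
      intro i hi j hj e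
      have := hpar i hi j hj
      rw [Fin.ext_iff]; omega
    · push Not at hpar
      obtain ⟨i, hi, j, hj, hij⟩ := hpar
      have hsub : S ⊆ {i, j} := by
        intro k hk
        have a1 := hx' i hi j hj
        have a2 := hx' i hi k hk
        have a3 := hx' j hj k hk
        simp only [Finset.mem_insert, Finset.mem_singleton, Fin.ext_iff]
        omega
      have := (Finset.card_le_card hsub).trans Finset.card_le_two
      omega

theorem stmt17 (n : ℕ) (hn : 3 ≤ n) :
    h2n n {Prrr, Pbby, Pyyb} = (n + 1) / 2 := by
  have hav := ext_avoids n
  apply le_antisymm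
  · have h : h2n n {Prrr, Pbby, Pyyb} ≤ h2 (extCol n) := Nat.sInf_le ⟨extCol n, hav, rfl⟩
    exact h.trans (ext_upper n hn)
  · refine le_csInf ⟨_, extCol n, hav, rfl⟩ ?_
    rintro m ⟨c, hc, rfl⟩
    exact lower_bound c hc
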